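/- There exists a positive constant β3 such that, with μ2 and β4 the thresholds of the seed-variance lemma, if μ < μ2, D² μ♭ ≤ 1/2 and β > max{β0, β3, β4, 6 e^{C̃} β° r²(r+1), √(3/2)}, then the truncated adiabatic invariant Φ = Φ^{(r)} satisfies σ²[Φ] ≥ (N/β²) · Ω²/10. -/

import Mathlib

open MeasureTheory

/-- Phase space `ℝ^{2N}` of the chain: `z = (x, y)`. -/
abbrev Phase (N : ℕ) := (Fin N → ℝ) × (Fin N → ℝ)

/-- Klein–Gordon chain Hamiltonian
`H(x,y) = (1/2) Σ_j [y_j² + x_j² + a(x_j − x_{j−1})² + (1/2) x_j⁴]`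
with periodic boundary conditions. -/
noncomputable def Ham (N : ℕ) (a : ℝ) (z : Phase N) : ℝ :=
  (1 / 2) * ∑ j : Fin N,
    ((z.2 j) ^ 2 + (z.1 j) ^ 2 + a * (z.1 j - z.1 ((finRotate N).symm j)) ^ 2 +
      (1 / 2) * (z.1 j) ^ 4)

/-- Gibbs measure `dm = e^{−βH} dz / Z(β,a)`. -/
noncomputable def gibbs (N : ℕ) (a β : ℝ) : Measure (Phase N) :=
  (ENNReal.ofReal (∫ z : Phase N, Real.exp (-β * Ham N a z)))⁻¹ •
    MeasureTheory.volume.withDensity fun z => ENNReal.ofReal (Real.exp (-β * Ham N a z))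

/-- Phase average `⟨X⟩ = ∫ X dm`. -/
noncomputable def pAvg (N : ℕ) (a β : ℝ) (X : Phase N → ℝ) : ℝ := ∫ z, X z ∂ gibbs N a β

/-- Phase variance `σ²[X] = ⟨X²⟩ − ⟨X⟩²`. -/
noncomputable def pVar (N : ℕ) (a β : ℝ) (X : Phase N → ℝ) : ℝ :=
  pAvg N a β (fun z => X z ^ 2) - (pAvg N a β X) ^ 2


open MvPolynomial


/-- Polynomials in the `2N` phase-space variables `x_0,…,x_{N−1},y_0,…,y_{N−1}`:
`Sum.inl l` is the variable `x_l` and `Sum.inr l` is `y_l`. -/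
abbrev Pol (N : ℕ) := MvPolynomial (Fin N ⊕ Fin N) ℝ

/-- Poisson bracket `{f,g} = Σ_l (∂f/∂x_l ∂g/∂y_l − ∂f/∂y_l ∂g/∂x_l)`. -/
noncomputable def pbracket {N : ℕ} (f g : Pol N) : Pol N :=
  ∑ l : Fin N,
    (pderiv (Sum.inl l) f * pderiv (Sum.inr l) g -
      pderiv (Sum.inr l) f * pderiv (Sum.inl l) g)

/-- Polynomial norm: the sum of the absolute values of the coefficients. -/
noncomputable def pnorm {N : ℕ} (f : Pol N) : ℝ :=
  ∑ d ∈ f.support, |coeff d f|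

/-- Action of the cyclic permutation `τ` on polynomials: `(τ f)(x,y) = f(τx, τy)`,
where `(τ x)_j = x_{j+1 mod N}`. -/
noncomputable def cshiftP {N : ℕ} (f : Pol N) : Pol N :=
  rename (Sum.map (finRotate N : Fin N → Fin N) (finRotate N : Fin N → Fin N)) f

/-- The extensive function generated by a seed: `f^⊕ = Σ_{l=1}^N τ^l f`. -/
noncomputable def oplus {N : ℕ} (f : Pol N) : Pol N :=
  ∑ l ∈ Finset.Icc 1 N, cshiftP^[l] f

/-- Set of sites appearing (in `x` or `y`) with nonzero exponent in a monomial. -/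
def siteSupport {N : ℕ} (d : (Fin N ⊕ Fin N) →₀ ℕ) : Finset (Fin N) :=
  Finset.univ.filter fun l => d (Sum.inl l) ≠ 0 ∨ d (Sum.inr l) ≠ 0

/-- `f` is left aligned with interaction range at most `m`: every monomial of `f`
involves only the sites `0,…,m`. -/
def RangeLE {N : ℕ} (m : ℕ) (f : Pol N) : Prop :=
  ∀ d ∈ f.support, ∀ l ∈ siteSupport d, (l : ℕ) ≤ m

/-- `F` is a decomposition `f = Σ_{m≥0} f^{(m)}` of the seed `f` into left-aligned
components of increasing interaction range (truncated at `m = N` on the periodic chain). -/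
def IsDecomp {N : ℕ} (f : Pol N) (F : ℕ → Pol N) : Prop :=
  f = ∑ m ∈ Finset.range (N + 1), F m ∧ ∀ m, RangeLE m (F m)

/-- Exponential decay `‖f^{(m)}‖ ≤ C e^{−σm}` of the components of a decomposition. -/
def Decay {N : ℕ} (C σ : ℝ) (F : ℕ → Pol N) : Prop :=
  ∀ m : ℕ, pnorm (F m) ≤ C * Real.exp (-σ * m)

/-- A seed `f` is of class `D(C,σ)` if it admits a decomposition `f = Σ_m f^{(m)}`
into left-aligned components of interaction range at most `m` with `‖f^{(m)}‖ ≤ C e^{−σm}`. -/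
def SeedClassD {N : ℕ} (C σ : ℝ) (f : Pol N) : Prop :=
  ∃ F : ℕ → Pol N, IsDecomp f F ∧ Decay C σ F


/-- Gibbs average of (the evaluation of) a polynomial. -/
noncomputable def gAvg (N : ℕ) (a β : ℝ) (f : Pol N) : ℝ :=
  pAvg N a β fun z => MvPolynomial.eval (Sum.elim z.1 z.2) f

/-- `μ := a/(1+2a)`. -/
noncomputable def muKG (a : ℝ) : ℝ := a / (1 + 2 * a)

/-- `σ0 := −ln(2μ)`. -/
noncomputable def sigma0 (a : ℝ) : ℝ := -Real.log (2 * muKG a)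

/-- `σ* := σ0/4` and `μ♭ := e^{−σ*}`. -/
noncomputable def muflat (a : ℝ) : ℝ := Real.exp (-(sigma0 a / 4))

/-- `A2 := √(1−2a)`. -/
noncomputable def A2c (a : ℝ) : ℝ := Real.sqrt (1 - 2 * a)

/-- `D := K1 √(1+4a)/(1 − 3/(4β²))`. -/
noncomputable def Dc (K1 a β : ℝ) : ℝ := K1 * Real.sqrt (1 + 4 * a) / (1 - 3 / (4 * β ^ 2))

/-- `K2 := 4(2K1)^{2+8a0}/((1−2a0)⁴(1−a0)⁶)`. -/
noncomputable def K2c (K1 a0 : ℝ) : ℝ :=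
  4 * (2 * K1) ^ ((2 : ℝ) + 8 * a0) / ((1 - 2 * a0) ^ 4 * (1 - a0) ^ 6)

/-- `K3 := 2⁸ K1⁴ K2`. -/
noncomputable def K3c (K1 a0 : ℝ) : ℝ := 2 ^ 8 * K1 ^ 4 * K2c K1 a0

/-- `K4 := K3 · 3³ e⁶ Ω⁶/(2⁹ C1²)`. -/
noncomputable def K4c (K1 a0 Ω C1 : ℝ) : ℝ :=
  K3c K1 a0 * 3 ^ 3 * Real.exp 6 * Ω ^ 6 / (2 ^ 9 * C1 ^ 2)

/-- `β° := 2⁶ e^{C̃−1} C1/((1−μ♭²)(1−μ♭) A2² Ω)`. -/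
noncomputable def betaCirc (a Ct C1 Ω : ℝ) : ℝ :=
  2 ^ 6 * Real.exp (Ct - 1) * C1 /
    ((1 - muflat a ^ 2) * (1 - muflat a) * A2c a ^ 2 * Ω)

/-- The decay-of-correlations estimate (Proposition on the decay of correlations)
for the constants `a0, β0, K1`. -/
def CorrEstimate (a0 β0 K1 : ℝ) : Prop :=
  ∀ (N : ℕ) (a β : ℝ) (r s : ℕ) (φ ψ : Pol N) (p q t u : ℕ),
    0 < a → a < a0 → β0 < β →
    φ.IsHomogeneous (2 * r) → ψ.IsHomogeneous (2 * s) →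
    p ≤ q → q < t → t ≤ u → u < N →
    (∀ dm ∈ φ.support, ∀ l ∈ siteSupport dm, p ≤ (l : ℕ) ∧ (l : ℕ) ≤ q) →
    (∀ dm ∈ ψ.support, ∀ l ∈ siteSupport dm, t ≤ (l : ℕ) ∧ (l : ℕ) ≤ u) →
    |gAvg N a β (φ * ψ) - gAvg N a β φ * gAvg N a β ψ| ≤
      K2c K1 a0 *
      Dc K1 a β ^ ((q - p) + (u - t) + 2 * min (t - q - 1) (N - u + p - 1) + 4) *
      (a * (2 + a)) ^ (min (t - q - 1) (N - u + p - 1)) *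
      ((2 : ℝ) ^ (r + s) * (r.factorial : ℝ) * (s.factorial : ℝ) /
        ((1 - 2 * a) * β) ^ (r + s)) *
      pnorm φ * pnorm ψ

/-- The Gibbs-moment estimate for extensive homogeneous polynomials of short range
(consequence of the monomial-average Proposition) for the constants `a0, β0, K1`. -/
def MomEstimate (a0 β0 K1 : ℝ) : Prop :=
  ∀ (N : ℕ) (a β : ℝ) (r' l' : ℕ) (f : Pol N),
    0 < a → a < a0 → β0 < β →
    f.IsHomogeneous (2 * r') →
    (∀ dm ∈ f.support, ∀ l ∈ siteSupport dm, (l : ℕ) ≤ l') → l' < N →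
    gAvg N a β (f * f) ≤
      (2 * K1) ^ ((1 : ℝ) + 4 * a0) / A2c a ^ (4 + 4 * r') *
      Dc K1 a β ^ (2 + l') * (2 / β) ^ (2 * r') * ((2 * r').factorial : ℝ) *
      pnorm f ^ 2

/-!
The Euler operator `Y = Σ_j y_j ∂/∂y_j` extracts the linear response of an observable to the total
momentum square `G = Σ_j y_j²`. Under the Gibbs measure the momenta are Gaussian, so integration by
parts gives `cov(G, p) = ⟨Y p⟩ / β` and `σ²[G] = 2N/β²`, and Cauchy–Schwarz becomes
`⟨Y p⟩² ≤ 2N σ²[p]`. For an extensive `p = φ^⊕`, shift invariance gives `⟨Y φ^⊕⟩ = N ⟨Y φ⟩`, hence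
`σ²[φ^⊕] ≥ (N/2) ⟨Y φ⟩²`, and it remains to show `⟨Y φ⟩ ≥ Ω/(2β)`. The oscillator part
`(Ω/2)(x_0² + y_0²)` of the seed contributes exactly `Ω/β`. By the moment estimate, the
longer-range part of `φ_0` is small with `μ`, and the corrections `φ_s` are summable: with
`n = s + 1`, their growth `n! ρ^{n-2}` is compensated by `ρ ≲ e/(2(r+1))` through Stirling's bound,
with a sum of order `1/β²`. Each of the two contributions is therefore at most `Ω/(4β)`.
-/

open ProbabilityTheory

theorem factorial_mul_exp_one_pow_le {n : ℕ} (hn : 0 < n) :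
    (n.factorial : ℝ) * Real.exp 1 ^ n ≤ Real.exp 1 * (n : ℝ) ^ (n + 1) := by
  have hn1 : (1 : ℝ) ≤ n := by exact_mod_cast hn
  have hsqrt : √(n : ℝ) ≤ n := Real.sqrt_le_left (by linarith) |>.2 (le_self_pow₀ hn1 two_ne_zero)
  have hseq : Stirling.stirlingSeq n ≤ Real.exp 1 / √2 := by
    obtain ⟨m, rfl⟩ := Nat.exists_eq_succ_of_ne_zero hn.ne'
    exact (Stirling.stirlingSeq'_antitone (Nat.zero_le m)).trans_eq Stirling.stirlingSeq_one
  rw [Stirling.stirlingSeq, div_le_iff₀ (by positivity), Real.sqrt_mul zero_le_two,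
    div_pow] at hseq
  calc (n.factorial : ℝ) * Real.exp 1 ^ n
      ≤ Real.exp 1 / √2 * (√2 * √n * ((n : ℝ) ^ n / Real.exp 1 ^ n)) * Real.exp 1 ^ n := by
        gcongr
    _ = Real.exp 1 * (√n * (n : ℝ) ^ n) := by field_simp
    _ ≤ Real.exp 1 * (n : ℝ) ^ (n + 1) := by rw [pow_succ' (n : ℝ) n]; gcongr

theorem sq_covariance_le_variance_mul_variance {α : Type*} {mα : MeasurableSpace α}
    {μ : Measure α} [IsFiniteMeasure μ] {f g : α → ℝ} (hf : MemLp f 2 μ) (hg : MemLp g 2 μ) :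
    cov[f, g; μ] ^ 2 ≤ Var[f; μ] * Var[g; μ] := by
  have h := discrim_le_zero (a := Var[f; μ]) (b := 2 * cov[f, g; μ]) (c := Var[g; μ]) fun t => by
    have ht : Var[t • f + g; μ] =
        Var[f; μ] * (t * t) + 2 * cov[f, g; μ] * t + Var[g; μ] := by
      rw [variance_add (hf.const_smul t) hg, variance_smul, covariance_smul_left]
      ring
    exact ht ▸ variance_nonneg _ _
  rw [discrim] at h
  linarith

section Polynomials

variable {σ : Type*} [Fintype σ]

theorem hasDerivAt_eval_comp {γ : ℝ → σ → ℝ} {γ' : σ → ℝ} {t : ℝ} (hγ : HasDerivAt γ γ' t)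
    (p : MvPolynomial σ ℝ) :
    HasDerivAt (fun u => eval (γ u) p) (∑ i, eval (γ t) (pderiv i p) * γ' i) t := by
  classical
  induction p using MvPolynomial.induction_on with
  | C c => simpa only [eval_C, pderiv_C, map_zero, zero_mul, Finset.sum_const_zero] using
      hasDerivAt_const t c
  | add p q hp hq =>
    simpa only [map_add, add_mul, Finset.sum_add_distrib] using hp.fun_add hq
  | mul_X p j hp =>
    have hj : ∑ i, eval (γ t) (pderiv i (X j : MvPolynomial σ ℝ)) * γ' i = γ' j := by
      simp [pderiv_X, Pi.single_apply, apply_ite]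
    simp only [map_mul, eval_X]
    refine (hp.fun_mul (hasDerivAt_pi.1 hγ j)).congr_deriv ?_
    rw [← hj, Finset.sum_mul, Finset.mul_sum, ← Finset.sum_add_distrib]
    refine Finset.sum_congr rfl fun i _ => ?_
    rw [pderiv_mul, map_add, map_mul, map_mul, eval_X]
    ring

theorem integrable_eval_mul_exp_neg_mul_sum_sq {b : ℝ} (hb : 0 < b) (p : MvPolynomial σ ℝ) :
    Integrable fun z : σ → ℝ => eval z p * Real.exp (-b * ∑ i, z i ^ 2) := by
  induction p using MvPolynomial.induction_on' with
  | monomial d c =>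
    have h (k : ℕ) : Integrable fun t : ℝ => t ^ k * Real.exp (-b * t ^ 2) := by
      simpa only [Real.rpow_natCast] using
        integrable_rpow_mul_exp_neg_mul_sq hb (neg_one_lt_zero.trans_le k.cast_nonneg)
    refine ((Integrable.fintype_prod (f := fun i t => t ^ d i * Real.exp (-b * t ^ 2))
      fun i => h (d i)).const_mul c).congr (Filter.Eventually.of_forall fun z => ?_)
    simp only [eval_monomial, Finset.prod_mul_distrib, ← Real.exp_sum, Finset.mul_sum]
    rw [Finsupp.prod_fintype _ _ fun i => pow_zero _, mul_assoc]
  | add p q hp hq => simpa only [map_add, add_mul] using hp.fun_add hq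

end Polynomials

section Hamiltonian

variable {N : ℕ} {a : ℝ}

theorem continuous_Ham : Continuous (Ham N a) := by
  unfold Ham
  fun_prop

theorem half_sum_sq_le_Ham (ha : 0 ≤ a) (z : Phase N) :
    1 / 2 * ∑ i, Sum.elim z.1 z.2 i ^ 2 ≤ Ham N a z := by
  rw [Ham, Fintype.sum_sum_type, ← Finset.sum_add_distrib]
  simp only [Sum.elim_inl, Sum.elim_inr]
  refine mul_le_mul_of_nonneg_left (Finset.sum_le_sum fun j _ => ?_) (by norm_num)
  have hcoupling : 0 ≤ a * (z.1 j - z.1 ((finRotate N).symm j)) ^ 2 := by positivity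
  have hquartic : 0 ≤ 1 / 2 * z.1 j ^ 4 := by positivity
  linarith

theorem hasLineDerivAt_Ham_momentum (z : Phase N) (j : Fin N) :
    HasLineDerivAt ℝ (Ham N a) (z.2 j) z (0, Pi.single j 1) := by
  set e : Fin N → ℝ := Pi.single j 1 with he
  have hcoord (k : Fin N) : HasDerivAt (fun t : ℝ => z.2 k + t * e k) (e k) 0 := by
    simpa only [id_eq, one_mul] using
      ((hasDerivAt_id (0 : ℝ)).mul_const (e k)).const_add (z.2 k)
  have h := (HasDerivAt.fun_sum (u := Finset.univ) fun k _ => ((((hcoord k).fun_pow 2).add_const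
    (z.1 k ^ 2)).add_const (a * (z.1 k - z.1 ((finRotate N).symm k)) ^ 2)).add_const
      (1 / 2 * z.1 k ^ 4)).const_mul (1 / 2 : ℝ)
  have hval : 1 / 2 * ∑ k, ((2 : ℕ) : ℝ) * (z.2 k + 0 * e k) ^ (2 - 1) * e k = z.2 j := by
    simp [he, Pi.single_apply]
  rw [hval] at h
  simpa [HasLineDerivAt, Ham] using h

end Hamiltonian

section GibbsMeasure

variable {N : ℕ} {a β : ℝ}

/-- The function on phase space defined by a polynomial in the variables `x`, `y`. -/
noncomputable abbrev evalPhase (p : Pol N) (z : Phase N) : ℝ :=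
  eval (Sum.elim z.1 z.2) p

theorem continuous_evalPhase (p : Pol N) : Continuous (evalPhase p) :=
  (continuous_eval p).comp <| continuous_pi fun i => by
    cases i <;> simp only [Sum.elim_inl, Sum.elim_inr] <;> fun_prop

theorem integrable_evalPhase_mul_exp_neg_Ham (ha : 0 ≤ a) (hβ : 0 < β) (p : Pol N) :
    Integrable fun z : Phase N => evalPhase p z * Real.exp (-β * Ham N a z) := by
  have hgauss := (volume_measurePreserving_sumPiEquivProdPi_symm
    fun _ : Fin N ⊕ Fin N => ℝ).integrable_comp_of_integrable
      (integrable_eval_mul_exp_neg_mul_sum_sq (half_pos hβ) p)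
  refine hgauss.mono ?_ (Filter.Eventually.of_forall fun z => ?_)
  · exact ((continuous_evalPhase p).mul
      (Real.continuous_exp.comp (continuous_const.mul continuous_Ham))).aestronglyMeasurable
  · have hHam := mul_le_mul_of_nonneg_left (half_sum_sq_le_Ham ha z) hβ.le
    have hz : (MeasurableEquiv.sumPiEquivProdPi fun _ : Fin N ⊕ Fin N => ℝ).symm z =
        Sum.elim z.1 z.2 := by
      ext i; cases i <;> rfl
    simp only [Function.comp_apply, hz, norm_mul, Real.norm_eq_abs, Real.abs_exp]
    refine mul_le_mul_of_nonneg_left (Real.exp_le_exp.2 ?_) (abs_nonneg _)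
    linarith

theorem integrable_exp_neg_Ham (ha : 0 ≤ a) (hβ : 0 < β) :
    Integrable fun z : Phase N => Real.exp (-β * Ham N a z) := by
  simpa only [map_one, one_mul] using integrable_evalPhase_mul_exp_neg_Ham ha hβ (1 : Pol N)

theorem integral_exp_neg_Ham_pos (ha : 0 ≤ a) (hβ : 0 < β) :
    0 < ∫ z : Phase N, Real.exp (-β * Ham N a z) :=
  integral_exp_pos (integrable_exp_neg_Ham ha hβ)

theorem measurable_ofReal_exp_neg_Ham :
    Measurable fun z : Phase N => ENNReal.ofReal (Real.exp (-β * Ham N a z)) :=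
  (Real.continuous_exp.comp (continuous_const.mul continuous_Ham)).measurable.ennreal_ofReal

theorem isProbabilityMeasure_gibbs (ha : 0 ≤ a) (hβ : 0 < β) :
    IsProbabilityMeasure (gibbs N a β) := by
  refine ⟨?_⟩
  rw [gibbs, Measure.smul_apply, withDensity_apply _ MeasurableSet.univ, Measure.restrict_univ,
    ← ofReal_integral_eq_lintegral_ofReal (integrable_exp_neg_Ham ha hβ)
      (Filter.Eventually.of_forall fun _ => (Real.exp_pos _).le), smul_eq_mul]
  exact ENNReal.inv_mul_cancel (ENNReal.ofReal_pos.2 (integral_exp_neg_Ham_pos ha hβ)).ne'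
    ENNReal.ofReal_ne_top

theorem integrable_evalPhase_gibbs (ha : 0 ≤ a) (hβ : 0 < β) (p : Pol N) :
    Integrable (evalPhase p) (gibbs N a β) := by
  refine Integrable.smul_measure ?_ <| ENNReal.inv_ne_top.2
    (ENNReal.ofReal_pos.2 (integral_exp_neg_Ham_pos ha hβ)).ne'
  rw [integrable_withDensity_iff measurable_ofReal_exp_neg_Ham
    (Filter.Eventually.of_forall fun _ => ENNReal.ofReal_lt_top)]
  simpa only [ENNReal.toReal_ofReal (Real.exp_pos _).le] using
    integrable_evalPhase_mul_exp_neg_Ham ha hβ p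

theorem memLp_evalPhase_gibbs (ha : 0 ≤ a) (hβ : 0 < β) (p : Pol N) :
    MemLp (evalPhase p) 2 (gibbs N a β) := by
  rw [memLp_two_iff_integrable_sq (continuous_evalPhase p).aestronglyMeasurable]
  exact (integrable_evalPhase_gibbs ha hβ (p ^ 2)).congr
    (Filter.Eventually.of_forall fun _ => map_pow _ _ _)

theorem gAvg_eq_integral_div (ha : 0 ≤ a) (hβ : 0 < β) (p : Pol N) :
    gAvg N a β p = (∫ z : Phase N, evalPhase p z * Real.exp (-β * Ham N a z)) /
      ∫ z : Phase N, Real.exp (-β * Ham N a z) := by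
  rw [gAvg, pAvg, gibbs, integral_smul_measure, integral_withDensity_eq_integral_toReal_smul
    measurable_ofReal_exp_neg_Ham (Filter.Eventually.of_forall fun _ => ENNReal.ofReal_lt_top),
    ENNReal.toReal_inv, ENNReal.toReal_ofReal (integral_exp_neg_Ham_pos ha hβ).le, smul_eq_mul,
    ← div_eq_inv_mul]
  simp only [ENNReal.toReal_ofReal (Real.exp_pos _).le, smul_eq_mul, mul_comm]

theorem gAvg_add (ha : 0 ≤ a) (hβ : 0 < β) (p q : Pol N) :
    gAvg N a β (p + q) = gAvg N a β p + gAvg N a β q := by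
  simp only [gAvg, pAvg, map_add]
  exact integral_add (integrable_evalPhase_gibbs ha hβ p) (integrable_evalPhase_gibbs ha hβ q)

theorem gAvg_sum (ha : 0 ≤ a) (hβ : 0 < β) {ι : Type*} (s : Finset ι) (f : ι → Pol N) :
    gAvg N a β (∑ i ∈ s, f i) = ∑ i ∈ s, gAvg N a β (f i) := by
  simp only [gAvg, pAvg, map_sum]
  exact integral_finsetSum s fun i _ => integrable_evalPhase_gibbs ha hβ (f i)

theorem gAvg_smul (c : ℝ) (p : Pol N) : gAvg N a β (c • p) = c * gAvg N a β p := by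
  simp only [gAvg, pAvg, smul_eval]
  exact integral_const_mul _ _

theorem gAvg_one (ha : 0 ≤ a) (hβ : 0 < β) : gAvg N a β 1 = 1 := by
  have := isProbabilityMeasure_gibbs (N := N) ha hβ
  simp [gAvg, pAvg]

theorem variance_evalPhase_gibbs (ha : 0 ≤ a) (hβ : 0 < β) (p : Pol N) :
    Var[evalPhase p; gibbs N a β] = pVar N a β (evalPhase p) := by
  have := isProbabilityMeasure_gibbs (N := N) ha hβ
  exact variance_eq_sub (memLp_evalPhase_gibbs ha hβ p)

theorem covariance_evalPhase_gibbs (ha : 0 ≤ a) (hβ : 0 < β) (p q : Pol N) :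
    cov[evalPhase p, evalPhase q; gibbs N a β] =
      gAvg N a β (p * q) - gAvg N a β p * gAvg N a β q := by
  have := isProbabilityMeasure_gibbs (N := N) ha hβ
  rw [covariance_eq_sub (memLp_evalPhase_gibbs ha hβ p) (memLp_evalPhase_gibbs ha hβ q)]
  simp only [gAvg, pAvg, map_mul, Pi.mul_apply]

theorem sq_gAvg_le_gAvg_mul_self (ha : 0 ≤ a) (hβ : 0 < β) (p : Pol N) :
    gAvg N a β p ^ 2 ≤ gAvg N a β (p * p) := by
  have := isProbabilityMeasure_gibbs (N := N) ha hβ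
  have h := variance_nonneg (evalPhase p) (gibbs N a β)
  rw [← covariance_self (continuous_evalPhase p).aemeasurable,
    covariance_evalPhase_gibbs ha hβ] at h
  linarith

theorem hasLineDerivAt_evalPhase_momentum (p : Pol N) (z : Phase N) (j : Fin N) :
    HasLineDerivAt ℝ (evalPhase p) (evalPhase (pderiv (Sum.inr j) p) z) z
      (0, Pi.single j 1) := by
  have hγ : HasDerivAt (fun t : ℝ => Sum.elim z.1 z.2 + t • Pi.single (Sum.inr j) 1)
      (Pi.single (Sum.inr j) 1) 0 := by
    simpa using ((hasDerivAt_id (0 : ℝ)).smul_const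
      (Pi.single (Sum.inr j) 1 : Fin N ⊕ Fin N → ℝ)).const_add (Sum.elim z.1 z.2)
  have hline (t : ℝ) : Sum.elim (z + t • ((0, Pi.single j 1) : Phase N)).1
      (z + t • ((0, Pi.single j 1) : Phase N)).2 =
        Sum.elim z.1 z.2 + t • Pi.single (Sum.inr j) 1 := by
    ext (i | i) <;> simp [Pi.single_apply]
  simpa only [HasLineDerivAt, evalPhase, hline, Pi.single_apply, mul_ite, mul_one, mul_zero,
    Finset.sum_ite_eq', Finset.mem_univ, if_true, zero_smul, add_zero] using
      hasDerivAt_eval_comp hγ p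

theorem gAvg_X_momentum_mul (ha : 0 ≤ a) (hβ : 0 < β) (j : Fin N) (p : Pol N) :
    gAvg N a β (X (Sum.inr j) * p) = gAvg N a β (pderiv (Sum.inr j) p) / β := by
  have : (volume : Measure (Phase N)).IsAddHaarMeasure := Measure.prod.instIsAddHaarMeasure _ _
  have hint := integral_bilinear_hasLineDerivAt_right_eq_neg_left_of_integrable
    (μ := (volume : Measure (Phase N))) (v := (0, Pi.single j 1)) (B := ContinuousLinearMap.mul ℝ ℝ)
    (f := evalPhase p) (f' := evalPhase (pderiv (Sum.inr j) p))
    (g := fun z => Real.exp (-β * Ham N a z))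
    (g' := fun z => Real.exp (-β * Ham N a z) * (-β * z.2 j))
    (by simpa using integrable_evalPhase_mul_exp_neg_Ham ha hβ (pderiv (Sum.inr j) p))
    (by
      refine ((integrable_evalPhase_mul_exp_neg_Ham ha hβ (X (Sum.inr j) * p)).const_mul
        (-β)).congr (Filter.Eventually.of_forall fun z => ?_)
      simp only [evalPhase, map_mul, eval_X, Sum.elim_inr, ContinuousLinearMap.mul_apply']
      ring)
    (by simpa using integrable_evalPhase_mul_exp_neg_Ham ha hβ p)
    (fun z _ => hasLineDerivAt_evalPhase_momentum p z j)
    (fun z _ => by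
      simpa [HasLineDerivAt] using
        HasDerivAt.exp (HasDerivAt.const_mul (-β) (hasLineDerivAt_Ham_momentum (a := a) z j)))
  simp only [ContinuousLinearMap.mul_apply'] at hint
  rw [gAvg_eq_integral_div ha hβ, gAvg_eq_integral_div ha hβ, div_right_comm, eq_comm,
    ← neg_eq_iff_eq_neg.2 hint, ← integral_neg]
  congr 1
  rw [div_eq_iff hβ.ne', ← integral_mul_const]
  congr 1 with z
  simp only [evalPhase, map_mul, eval_X, Sum.elim_inr]
  ring

theorem gAvg_cshiftP (ha : 0 ≤ a) (hβ : 0 < β) (p : Pol N) :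
    gAvg N a β (cshiftP p) = gAvg N a β p := by
  let e : (Fin N → ℝ) ≃ᵐ (Fin N → ℝ) :=
    MeasurableEquiv.arrowCongr' (finRotate N).symm (MeasurableEquiv.refl ℝ)
  have he : MeasurePreserving e volume volume :=
    volume_preserving_arrowCongr' _ _ (MeasurePreserving.id _)
  have hshift : MeasurePreserving (MeasurableEquiv.prodCongr e e)
      (volume : Measure (Phase N)) volume := he.prod he
  have hHam (z : Phase N) : Ham N a (MeasurableEquiv.prodCongr e e z) = Ham N a z := by
    rw [Ham, Ham, ← Equiv.sum_comp (finRotate N) fun j => z.2 j ^ 2 + z.1 j ^ 2 +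
      a * (z.1 j - z.1 ((finRotate N).symm j)) ^ 2 + 1 / 2 * z.1 j ^ 4]
    simp only [Equiv.symm_apply_apply]
    refine congrArg _ (Finset.sum_congr rfl fun j _ => ?_)
    have hj : (MeasurableEquiv.prodCongr e e z).1 ((finRotate N).symm j) = z.1 j :=
      congrArg z.1 ((finRotate N).apply_symm_apply j)
    rw [hj]
    rfl
  have heval (z : Phase N) :
      evalPhase p (MeasurableEquiv.prodCongr e e z) = evalPhase (cshiftP p) z := by
    rw [evalPhase, evalPhase, cshiftP, eval_rename]
    congr 2 with i
    cases i <;> rfl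
  rw [gAvg_eq_integral_div ha hβ, gAvg_eq_integral_div ha hβ,
    ← hshift.integral_comp' fun z => evalPhase p z * Real.exp (-β * Ham N a z)]
  simp only [hHam, heval]

end GibbsMeasure

section MomentumEuler

variable {N : ℕ} {a β : ℝ}

/-- The Euler operator `Y = Σ_j y_j ∂/∂y_j` in the momenta, which multiplies a monomial by its
degree in `y`. -/
noncomputable def momentumEuler (N : ℕ) : Derivation ℝ (Pol N) (Pol N) :=
  ∑ j, (X (Sum.inr j) : Pol N) • pderiv (Sum.inr j)

theorem momentumEuler_apply (p : Pol N) :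
    momentumEuler N p = ∑ j, X (Sum.inr j) * pderiv (Sum.inr j) p := by
  have h := congrFun (map_sum Derivation.coeFnAddMonoidHom
    (fun j : Fin N => (X (Sum.inr j) : Pol N) • pderiv (R := ℝ) (Sum.inr j)) Finset.univ) p
  rw [Finset.sum_apply] at h
  exact h

theorem coeff_momentumEuler (d : (Fin N ⊕ Fin N) →₀ ℕ) (p : Pol N) :
    coeff d (momentumEuler N p) = (∑ j, d (Sum.inr j) : ℕ) * coeff d p := by
  classical
  induction p using MvPolynomial.induction_on' with
  | monomial e c =>
    have he : momentumEuler N (monomial e c) = (∑ j, e (Sum.inr j)) • monomial e c := by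
      simp only [momentumEuler_apply, X_mul_pderiv_monomial, Finset.sum_smul]
    rw [he, coeff_smul, coeff_monomial, nsmul_eq_mul]
    split_ifs with h
    · rw [h]
    · simp only [mul_zero]
  | add p q hp hq => rw [map_add, coeff_add, coeff_add, hp, hq, mul_add]

theorem momentumEuler_X_inl_sq (j : Fin N) : momentumEuler N (X (Sum.inl j) ^ 2) = 0 := by
  simp [momentumEuler_apply, pderiv_X]

theorem momentumEuler_X_inr_sq (j : Fin N) :
    momentumEuler N (X (Sum.inr j) ^ 2) = (2 : ℝ) • X (Sum.inr j) ^ 2 := by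
  have hX : momentumEuler N (X (Sum.inr j)) = X (Sum.inr j) := by
    simp [momentumEuler_apply, pderiv_X, Pi.single_apply]
  rw [sq, Derivation.leibniz, hX, smul_eq_mul, two_smul]

theorem momentumEuler_cshiftP (p : Pol N) :
    momentumEuler N (cshiftP p) = cshiftP (momentumEuler N p) := by
  have hinj : Function.Injective (Sum.map (finRotate N) (finRotate N)) :=
    (finRotate N).injective.sumMap (finRotate N).injective
  rw [momentumEuler_apply, momentumEuler_apply, cshiftP, cshiftP, map_sum,
    ← Equiv.sum_comp (finRotate N)]
  refine Finset.sum_congr rfl fun j _ => ?_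
  rw [map_mul, rename_X, ← pderiv_rename hinj, Sum.map_inr]

theorem momentumEuler_oplus (p : Pol N) :
    momentumEuler N (oplus p) = oplus (momentumEuler N p) := by
  rw [oplus, oplus, map_sum]
  exact Finset.sum_congr rfl fun l _ =>
    (show Function.Commute (momentumEuler N) cshiftP from momentumEuler_cshiftP).iterate_right l p

/-- Twice the kinetic energy, `Σ_j y_j²`. -/
noncomputable def momentumSqSum (N : ℕ) : Pol N := ∑ j, X (Sum.inr j) ^ 2

theorem gAvg_momentumSqSum_mul (ha : 0 ≤ a) (hβ : 0 < β) (p : Pol N) :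
    gAvg N a β (momentumSqSum N * p) =
      (N * gAvg N a β p + gAvg N a β (momentumEuler N p)) / β := by
  have hj (j : Fin N) : gAvg N a β (X (Sum.inr j) ^ 2 * p) =
      (gAvg N a β p + gAvg N a β (X (Sum.inr j) * pderiv (Sum.inr j) p)) / β := by
    rw [sq, mul_assoc, gAvg_X_momentum_mul ha hβ, pderiv_mul, pderiv_X_self, one_mul,
      gAvg_add ha hβ]
  rw [momentumSqSum, Finset.sum_mul, gAvg_sum ha hβ, momentumEuler_apply, gAvg_sum ha hβ]
  simp only [hj, ← Finset.sum_div, Finset.sum_add_distrib, Finset.sum_const, Finset.card_univ,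
    Fintype.card_fin, nsmul_eq_mul]

theorem gAvg_momentumSqSum (ha : 0 ≤ a) (hβ : 0 < β) :
    gAvg N a β (momentumSqSum N) = N / β := by
  have h := gAvg_momentumSqSum_mul (N := N) ha hβ 1
  have hzero : gAvg N a β 0 = 0 := by simpa only [zero_smul, zero_mul] using gAvg_smul 0 (1 : Pol N)
  rwa [mul_one, Derivation.map_one_eq_zero, hzero, add_zero, gAvg_one ha hβ, mul_one] at h

theorem covariance_momentumSqSum (ha : 0 ≤ a) (hβ : 0 < β) (p : Pol N) :
    cov[evalPhase (momentumSqSum N), evalPhase p; gibbs N a β] =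
      gAvg N a β (momentumEuler N p) / β := by
  rw [covariance_evalPhase_gibbs ha hβ, gAvg_momentumSqSum_mul ha hβ, gAvg_momentumSqSum ha hβ]
  ring

theorem variance_momentumSqSum (ha : 0 ≤ a) (hβ : 0 < β) :
    Var[evalPhase (momentumSqSum N); gibbs N a β] = 2 * N / β ^ 2 := by
  have hY : momentumEuler N (momentumSqSum N) = (2 : ℝ) • momentumSqSum N := by
    simp only [momentumSqSum, map_sum, momentumEuler_X_inr_sq, Finset.smul_sum]
  rw [← covariance_self (continuous_evalPhase _).aemeasurable, covariance_momentumSqSum ha hβ, hY,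
    gAvg_smul, gAvg_momentumSqSum ha hβ]
  ring

theorem sq_gAvg_momentumEuler_le (ha : 0 ≤ a) (hβ : 0 < β) (p : Pol N) :
    gAvg N a β (momentumEuler N p) ^ 2 ≤ 2 * N * pVar N a β (evalPhase p) := by
  have := isProbabilityMeasure_gibbs (N := N) ha hβ
  have h := sq_covariance_le_variance_mul_variance
    (memLp_evalPhase_gibbs ha hβ (momentumSqSum N)) (memLp_evalPhase_gibbs ha hβ p)
  rwa [covariance_momentumSqSum ha hβ, variance_momentumSqSum ha hβ,
    variance_evalPhase_gibbs ha hβ, div_pow, div_mul_eq_mul_div,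
    div_le_div_iff_of_pos_right (by positivity)] at h

theorem gAvg_oplus (ha : 0 ≤ a) (hβ : 0 < β) (p : Pol N) :
    gAvg N a β (oplus p) = N * gAvg N a β p := by
  have hiter (l : ℕ) : gAvg N a β (cshiftP^[l] p) = gAvg N a β p := by
    induction l with
    | zero => rfl
    | succ l ih => rw [Function.iterate_succ_apply', gAvg_cshiftP ha hβ, ih]
  rw [oplus, gAvg_sum ha hβ]
  simp only [hiter, Finset.sum_const, Nat.card_Icc, Nat.add_sub_cancel, nsmul_eq_mul]

theorem half_mul_sq_gAvg_momentumEuler_le_pVar_oplus (hN : 0 < N) (ha : 0 ≤ a) (hβ : 0 < β)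
    (p : Pol N) :
    N / 2 * gAvg N a β (momentumEuler N p) ^ 2 ≤ pVar N a β (evalPhase (oplus p)) := by
  have h := sq_gAvg_momentumEuler_le ha hβ (oplus p)
  rw [momentumEuler_oplus, gAvg_oplus ha hβ] at h
  have hN' : (0 : ℝ) < 2 * N := by positivity
  refine le_of_mul_le_mul_left (le_of_eq_of_le ?_ h) hN'
  ring

end MomentumEuler

section MomentBounds

variable {N : ℕ} {a β : ℝ}

theorem pnorm_nonneg (f : Pol N) : 0 ≤ pnorm f :=
  Finset.sum_nonneg fun _ _ => abs_nonneg _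

theorem pnorm_le_mul_pnorm {f g : Pol N} {k : ℝ}
    (h : ∀ d, |coeff d g| ≤ k * |coeff d f|) : pnorm g ≤ k * pnorm f := by
  have hsupp : g.support ⊆ f.support := fun d hd => by
    rw [mem_support_iff] at hd ⊢
    intro h0
    have hd0 := h d
    rw [h0, abs_zero, mul_zero, abs_nonpos_iff] at hd0
    exact hd hd0
  calc ∑ d ∈ g.support, |coeff d g| ≤ ∑ d ∈ f.support, |coeff d g| :=
        Finset.sum_le_sum_of_subset_of_nonneg hsupp fun _ _ _ => abs_nonneg _
    _ ≤ ∑ d ∈ f.support, k * |coeff d f| := Finset.sum_le_sum fun d _ => h d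
    _ = k * pnorm f := (Finset.mul_sum _ _ _).symm

theorem pnorm_homogeneousComponent_le (n : ℕ) (f : Pol N) :
    pnorm (homogeneousComponent n f) ≤ pnorm f := by
  rw [← one_mul (pnorm f)]
  refine pnorm_le_mul_pnorm fun d => ?_
  rw [coeff_homogeneousComponent]
  split_ifs <;> simp

theorem sum_inr_le_of_isHomogeneous {f : Pol N} {n : ℕ} (hf : f.IsHomogeneous n)
    {d : (Fin N ⊕ Fin N) →₀ ℕ} (hd : coeff d f ≠ 0) : ∑ j, d (Sum.inr j) ≤ n := by
  have hdeg : d.degree = n := (DFunLike.congr_fun Finsupp.degree_eq_weight_one d).trans (hf hd)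
  rw [← hdeg, Finsupp.degree_eq_sum, Fintype.sum_sum_type]
  exact Nat.le_add_left _ _

theorem pnorm_momentumEuler_le {f : Pol N} {n : ℕ} (hf : f.IsHomogeneous n) :
    pnorm (momentumEuler N f) ≤ n * pnorm f := by
  refine pnorm_le_mul_pnorm fun d => ?_
  rw [coeff_momentumEuler, abs_mul, Nat.abs_cast]
  by_cases hd : coeff d f = 0
  · simp only [hd, abs_zero, mul_zero, le_refl]
  · gcongr
    exact sum_inr_le_of_isHomogeneous hf hd

theorem support_momentumEuler_subset (f : Pol N) : (momentumEuler N f).support ⊆ f.support := by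
  intro d hd
  rw [mem_support_iff, coeff_momentumEuler] at hd
  exact mem_support_iff.2 (right_ne_zero_of_mul hd)

theorem support_homogeneousComponent_subset (n : ℕ) (f : Pol N) :
    (homogeneousComponent n f).support ⊆ f.support := by
  intro d hd
  rw [mem_support_iff, coeff_homogeneousComponent] at hd
  exact mem_support_iff.2 fun h0 => hd (by rw [h0, ite_self])

theorem isHomogeneous_momentumEuler {f : Pol N} {n : ℕ} (hf : f.IsHomogeneous n) :
    (momentumEuler N f).IsHomogeneous n := fun _ hd =>
  hf (mem_support_iff.1 (support_momentumEuler_subset f (mem_support_iff.2 hd)))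

theorem RangeLE.of_support_subset {f g : Pol N} {m : ℕ} (hf : RangeLE m f)
    (h : g.support ⊆ f.support) : RangeLE m g := fun d hd => hf d (h hd)

/-- The first-moment form of the moment estimate: averages of homogeneous polynomials of degree
`2n` and interaction range at most `m` are bounded by `A n * D ^ m` times their norm. -/
def MomentBound (N : ℕ) (a β : ℝ) (A : ℕ → ℝ) (D : ℝ) : Prop :=
  ∀ ⦃n m : ℕ⦄ ⦃f : Pol N⦄, f.IsHomogeneous (2 * n) → RangeLE m f →
    |gAvg N a β f| ≤ A n * D ^ m * pnorm f

namespace MomentBound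

variable {A : ℕ → ℝ} {D : ℝ}

theorem abs_gAvg_momentumEuler_le (h : MomentBound N a β A D) (hA : ∀ n, 0 ≤ A n) (hD : 0 ≤ D)
    {n m : ℕ} {f : Pol N} (hf : f.IsHomogeneous (2 * n)) (hr : RangeLE m f) :
    |gAvg N a β (momentumEuler N f)| ≤ A n * D ^ m * (2 * n * pnorm f) := by
  have hnorm := pnorm_momentumEuler_le hf
  push_cast at hnorm
  have hAn := hA n
  exact (h (isHomogeneous_momentumEuler hf)
    (hr.of_support_subset (support_momentumEuler_subset f))).trans (by gcongr)

theorem abs_gAvg_momentumEuler_sum_le (h : MomentBound N a β A D) (ha : 0 ≤ a) (hβ : 0 < β)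
    (hA : ∀ n, 0 ≤ A n) (hD : 0 ≤ D) {n : ℕ} {S : Finset ℕ} {F : ℕ → Pol N} {C σ : ℝ}
    (hhom : (∑ m ∈ S, F m).IsHomogeneous (2 * n)) (hrange : ∀ m, RangeLE m (F m))
    (hdecay : Decay C σ F) :
    |gAvg N a β (momentumEuler N (∑ m ∈ S, F m))| ≤
      A n * (2 * n) * C * ∑ m ∈ S, (D * Real.exp (-σ)) ^ m := by
  -- The components need not be homogeneous, but their homogeneous parts have the same sum.
  have hsum : ∑ m ∈ S, F m = ∑ m ∈ S, homogeneousComponent (2 * n) (F m) := by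
    rw [← map_sum, homogeneousComponent_of_mem ((mem_homogeneousSubmodule _ _).2 hhom), if_pos rfl]
  rw [hsum, map_sum, gAvg_sum ha hβ, Finset.mul_sum]
  refine (Finset.abs_sum_le_sum_abs _ _).trans (Finset.sum_le_sum fun m _ => ?_)
  have hpnorm : pnorm (homogeneousComponent (2 * n) (F m)) ≤ C * Real.exp (-σ) ^ m := by
    rw [← Real.exp_nat_mul, mul_comm (m : ℝ)]
    exact (pnorm_homogeneousComponent_le _ _).trans (hdecay m)
  have hAn := hA n
  calc _ ≤ A n * D ^ m * (2 * n * pnorm (homogeneousComponent (2 * n) (F m))) :=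
        h.abs_gAvg_momentumEuler_le hA hD (homogeneousComponent_isHomogeneous _ _)
          ((hrange m).of_support_subset (support_homogeneousComponent_subset _ _))
    _ ≤ A n * D ^ m * (2 * n * (C * Real.exp (-σ) ^ m)) := by gcongr
    _ = A n * (2 * n) * C * (D * Real.exp (-σ)) ^ m := by rw [mul_pow]; ring

theorem abs_gAvg_momentumEuler_le_of_seedClassD (h : MomentBound N a β A D) (ha : 0 ≤ a)
    (hβ : 0 < β) (hA : ∀ n, 0 ≤ A n) (hD : 0 ≤ D) {n : ℕ} {f : Pol N} {C σ : ℝ}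
    (hhom : f.IsHomogeneous (2 * n)) (hf : SeedClassD C σ f)
    (hσ : D * Real.exp (-σ) ≤ 1 / 2) :
    |gAvg N a β (momentumEuler N f)| ≤ A n * (2 * n) * C * 2 := by
  obtain ⟨F, ⟨rfl, hrange⟩, hdecay⟩ := hf
  have hC : 0 ≤ C := by simpa using (pnorm_nonneg _).trans (hdecay 0)
  have hAn := hA n
  refine (h.abs_gAvg_momentumEuler_sum_le ha hβ hA hD hhom hrange hdecay).trans ?_
  gcongr
  have hx0 : 0 ≤ D * Real.exp (-σ) := by positivity
  rw [Finset.range_eq_Ico]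
  refine (geom_sum_Ico_le_of_lt_one hx0 (by linarith)).trans ?_
  rw [pow_zero, div_le_iff₀ (by linarith)]
  linarith

theorem abs_gAvg_momentumEuler_sub_le (h : MomentBound N a β A D) (ha : 0 ≤ a) (hβ : 0 < β)
    (hA : ∀ n, 0 ≤ A n) (hD : 0 ≤ D) {n : ℕ} {f : Pol N} {F : ℕ → Pol N} {C σ : ℝ}
    (hhom : f.IsHomogeneous (2 * n)) (hhom0 : (F 0).IsHomogeneous (2 * n)) (hF : IsDecomp f F)
    (hdecay : Decay C σ F) (hσ : D * Real.exp (-σ) ≤ 1 / 2) :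
    |gAvg N a β (momentumEuler N f) - gAvg N a β (momentumEuler N (F 0))| ≤
      A n * (2 * n) * C * (2 * (D * Real.exp (-σ))) := by
  obtain ⟨rfl, hrange⟩ := hF
  have hsplit : ∑ m ∈ Finset.range (N + 1), F m = F 0 + ∑ m ∈ Finset.Ico 1 (N + 1), F m := by
    rw [Finset.range_eq_Ico, Finset.sum_eq_sum_Ico_succ_bot N.succ_pos]
  have htail : (∑ m ∈ Finset.Ico 1 (N + 1), F m).IsHomogeneous (2 * n) := by
    rw [← add_sub_cancel_left (F 0) (∑ m ∈ Finset.Ico 1 (N + 1), F m), ← hsplit]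
    exact hhom.sub hhom0
  have hC : 0 ≤ C := by simpa using (pnorm_nonneg _).trans (hdecay 0)
  have hAn := hA n
  rw [hsplit, map_add, gAvg_add ha hβ, add_sub_cancel_left]
  refine (h.abs_gAvg_momentumEuler_sum_le ha hβ hA hD htail hrange hdecay).trans ?_
  gcongr
  have hx0 : 0 ≤ D * Real.exp (-σ) := by positivity
  refine (geom_sum_Ico_le_of_lt_one hx0 (by linarith)).trans ?_
  rw [pow_one, div_le_iff₀ (by linarith)]
  nlinarith

end MomentBound

end MomentBounds

section Constants

variable {a : ℝ}

theorem muKG_pos (ha : 0 < a) : 0 < muKG a := by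
  unfold muKG
  positivity

theorem one_sub_two_mul_muKG (ha : 0 ≤ a) : 1 - 2 * muKG a = 1 / (1 + 2 * a) := by
  unfold muKG
  field_simp
  ring

theorem exp_neg_sigma0 (ha : 0 < a) : Real.exp (-sigma0 a) = 2 * muKG a := by
  have hμ := muKG_pos ha
  rw [sigma0, neg_neg, Real.exp_log (by positivity)]

theorem sigma0_pos (ha : 0 < a) : 0 < sigma0 a := by
  have hμ : 0 < 1 - 2 * muKG a := by
    rw [one_sub_two_mul_muKG ha.le]
    positivity
  rw [← neg_lt_zero, ← Real.exp_lt_one_iff, exp_neg_sigma0 ha]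
  linarith

theorem muflat_lt_one (ha : 0 < a) : muflat a < 1 :=
  Real.exp_lt_one_iff.2 (by linarith [sigma0_pos ha])

theorem muflat_sq_lt_one (ha : 0 < a) : muflat a ^ 2 < 1 :=
  pow_lt_one₀ (Real.exp_nonneg _) (muflat_lt_one ha) two_ne_zero

variable {K1 β : ℝ}

theorem one_le_Dc (hK1 : 1 ≤ K1) (ha : 0 ≤ a) (hβ : 3 / 2 < β ^ 2) : 1 ≤ Dc K1 a β := by
  have hb : 3 / (4 * β ^ 2) ≤ 1 / 2 := by
    rw [div_le_iff₀ (by positivity)]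
    linarith
  have hb0 : 0 ≤ 3 / (4 * β ^ 2) := by positivity
  have hs : 1 ≤ Real.sqrt (1 + 4 * a) := Real.one_le_sqrt.2 (by linarith)
  rw [Dc, le_div_iff₀ (by linarith)]
  nlinarith

theorem Dc_le_four_mul (hK1 : 0 ≤ K1) (ha : a ≤ 1 / 2) (hβ : 3 / 2 < β ^ 2) :
    Dc K1 a β ≤ 4 * K1 := by
  have hb : 3 / (4 * β ^ 2) ≤ 1 / 2 := by
    rw [div_le_iff₀ (by positivity)]
    linarith
  have hs : Real.sqrt (1 + 4 * a) ≤ 2 := by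
    rw [Real.sqrt_le_left (by norm_num)]
    linarith
  rw [Dc, div_le_iff₀ (by linarith)]
  nlinarith

theorem Dc_mul_exp_neg_le_half (hD : 1 ≤ Dc K1 a β) (hflat : Dc K1 a β ^ 2 * muflat a ≤ 1 / 2)
    {σ : ℝ} (hσ : sigma0 a / 4 ≤ σ) : Dc K1 a β * Real.exp (-σ) ≤ 1 / 2 := by
  refine le_trans ?_ hflat
  have hexp : Real.exp (-σ) ≤ muflat a := Real.exp_le_exp.2 (neg_le_neg hσ)
  gcongr
  exact le_self_pow₀ hD two_ne_zero

end Constants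

section MomEstimate

theorem factorial_two_mul_le_sq (n : ℕ) : (2 * n).factorial ≤ (2 ^ n * n.factorial) ^ 2 :=
  calc (2 * n).factorial = (2 * n).choose n * n.factorial * n.factorial := by
        rw [two_mul, Nat.add_choose_mul_factorial_mul_factorial]
    _ ≤ 2 ^ (2 * n) * n.factorial * n.factorial := by
        gcongr
        exact Nat.choose_le_two_pow _ _
    _ = (2 ^ n * n.factorial) ^ 2 := by ring

/-- The square root of the numerical prefactor of the second-moment estimate `MomEstimate`. -/
noncomputable def momConst (K1 a0 : ℝ) : ℝ := Real.sqrt ((2 * K1) ^ ((1 : ℝ) + 4 * a0))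

/-- The factor `A n` for which `MomEstimate` gives a `MomentBound` with rate `Dc K1 a β`. -/
noncomputable def momFactor (K1 a0 a β : ℝ) (n : ℕ) : ℝ :=
  momConst K1 a0 / (1 - 2 * a) ^ (n + 1) * Dc K1 a β * (4 / β) ^ n * (n.factorial : ℝ)

variable {N : ℕ} {a0 β0 K1 a β : ℝ}

theorem momConst_nonneg : 0 ≤ momConst K1 a0 := Real.sqrt_nonneg _

theorem momFactor_nonneg (ha : a < 1 / 2) (hβ : 0 < β) (hD : 0 ≤ Dc K1 a β) (n : ℕ) :
    0 ≤ momFactor K1 a0 a β n := by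
  have hv : 0 < 1 - 2 * a := by linarith
  have hκ : 0 ≤ momConst K1 a0 := momConst_nonneg
  unfold momFactor
  positivity

theorem A2c_pow (ha : a ≤ 1 / 2) (n : ℕ) : A2c a ^ (4 + 4 * n) = ((1 - 2 * a) ^ (n + 1)) ^ 2 := by
  rw [show 4 + 4 * n = 2 * (2 * (n + 1)) by ring, A2c, pow_mul, Real.sq_sqrt (by linarith)]
  ring

theorem MomEstimate.momentBound (hMom : MomEstimate a0 β0 K1) (hN : 0 < N) (ha : 0 < a)
    (haa : a < a0) (ha' : a < 1 / 2) (hββ : β0 < β) (hβ : 0 < β) (hK1 : 0 ≤ K1)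
    (hD : 1 ≤ Dc K1 a β) : MomentBound N a β (momFactor K1 a0 a β) (Dc K1 a β) := by
  intro n m f hf hrange
  have hv : 0 < 1 - 2 * a := by linarith
  have hA := momFactor_nonneg (a0 := a0) ha' hβ (zero_le_one.trans hD) n
  have hpn := pnorm_nonneg f
  -- On the periodic chain sites never exceed `N - 1`, so neither does the effective range.
  have hsq := hMom N a β n (min m (N - 1)) f ha haa hββ hf
    (fun d hd l hl => le_min (hrange d hd l hl) (Nat.le_sub_one_of_lt l.2)) (by omega)
  have hDpow : Dc K1 a β ^ (2 + min m (N - 1)) ≤ (Dc K1 a β * Dc K1 a β ^ m) ^ 2 := by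
    rw [← pow_succ', ← pow_mul]
    exact pow_le_pow_right₀ hD (by omega)
  have hfact : ((2 * n).factorial : ℝ) ≤ (2 ^ n * (n.factorial : ℝ)) ^ 2 :=
    mod_cast factorial_two_mul_le_sq n
  have hκ : (2 * K1) ^ ((1 : ℝ) + 4 * a0) = momConst K1 a0 ^ 2 :=
    (Real.sq_sqrt (by positivity)).symm
  refine abs_le_of_sq_le_sq ((sq_gAvg_le_gAvg_mul_self ha.le hβ f).trans (hsq.trans ?_))
    (by positivity)
  rw [A2c_pow ha'.le, hκ]
  calc momConst K1 a0 ^ 2 / ((1 - 2 * a) ^ (n + 1)) ^ 2 * Dc K1 a β ^ (2 + min m (N - 1)) *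
        (2 / β) ^ (2 * n) * ((2 * n).factorial : ℝ) * pnorm f ^ 2
      ≤ momConst K1 a0 ^ 2 / ((1 - 2 * a) ^ (n + 1)) ^ 2 * (Dc K1 a β * Dc K1 a β ^ m) ^ 2 *
        (2 / β) ^ (2 * n) * (2 ^ n * (n.factorial : ℝ)) ^ 2 * pnorm f ^ 2 := by gcongr
    _ = (momFactor K1 a0 a β n * Dc K1 a β ^ m * pnorm f) ^ 2 := by
        rw [momFactor, show (4 / β : ℝ) = 2 / β * 2 by ring, mul_pow (2 / β)]
        generalize (1 - 2 * a) ^ (n + 1) = w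
        ring

end MomEstimate

section Seed

variable {N : ℕ} {a0 K1 a β Ω : ℝ}

/-- The threshold `μ2`, below which the range-`≥ 1` part of the seed is a small perturbation of
its leading part. -/
noncomputable def seedThreshold (K1 a0 : ℝ) : ℝ :=
  (1 - 2 * a0) ^ 2 / (4096 * K1 ^ 2 * (momConst K1 a0 + 1))

theorem seedThreshold_pos (hK1 : 0 < K1) (ha0 : a0 < 1 / 2) :
    0 < seedThreshold K1 a0 := by
  have hw : 0 < 1 - 2 * a0 := by linarith
  have hκ : 0 ≤ momConst K1 a0 := momConst_nonneg
  unfold seedThreshold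
  positivity

theorem gAvg_momentum_sq (ha : 0 ≤ a) (hβ : 0 < β) (j : Fin N) :
    gAvg N a β (X (Sum.inr j) ^ 2) = 1 / β := by
  rw [sq, gAvg_X_momentum_mul ha hβ, pderiv_X_self, gAvg_one ha hβ]

theorem gAvg_momentumEuler_oscillator (ha : 0 ≤ a) (hβ : 0 < β) (Ω : ℝ) (j : Fin N) :
    gAvg N a β (momentumEuler N (C (Ω / 2) * (X (Sum.inl j) ^ 2 + X (Sum.inr j) ^ 2))) =
      Ω / β := by
  rw [← smul_eq_C_mul, Derivation.map_smul, map_add, momentumEuler_X_inl_sq,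
    momentumEuler_X_inr_sq, zero_add, gAvg_smul, gAvg_smul, gAvg_momentum_sq ha hβ]
  ring

theorem isHomogeneous_oscillator (Ω : ℝ) (j : Fin N) :
    (C (Ω / 2) * (X (Sum.inl j) ^ 2 + X (Sum.inr j) ^ 2) : Pol N).IsHomogeneous 2 :=
  (zero_add 2) ▸ (isHomogeneous_C _ _).mul ((isHomogeneous_X_pow _ 2).add (isHomogeneous_X_pow _ 2))

theorem const_mul_le_sq_of_lt_seedThreshold {μ : ℝ} (hK1 : 0 < K1) (hμ0 : 0 ≤ μ)
    (hμ : μ < seedThreshold K1 a0) :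
    4096 * K1 ^ 2 * momConst K1 a0 * μ ≤ (1 - 2 * a0) ^ 2 := by
  have hκ : 0 ≤ momConst K1 a0 := momConst_nonneg
  rw [seedThreshold, lt_div_iff₀ (by positivity)] at hμ
  have hμK : 0 ≤ μ * K1 ^ 2 := by positivity
  nlinarith

theorem abs_gAvg_momentumEuler_seed_sub_le
    (h : MomentBound N a β (momFactor K1 a0 a β) (Dc K1 a β)) (hN : 0 < N) (ha : 0 < a)
    (haa : a < a0) (ha0 : a0 < 1 / 2) (hβ : 3 / 2 < β ^ 2) (hβ0 : 0 < β) (hK1 : 1 ≤ K1)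
    (hΩ : 0 < Ω) (hflat : Dc K1 a β ^ 2 * muflat a ≤ 1 / 2)
    (hμ : muKG a < seedThreshold K1 a0) {φ : Pol N} (hφ : φ.IsHomogeneous 2) {F : ℕ → Pol N}
    (hF : IsDecomp φ F)
    (hF0 : F 0 = C (Ω / 2) * (X (Sum.inl ⟨0, hN⟩) ^ 2 + X (Sum.inr ⟨0, hN⟩) ^ 2))
    (hdecay : Decay (Ω / (1 - 2 * muKG a)) (sigma0 a) F) :
    |gAvg N a β (momentumEuler N φ) - Ω / β| ≤ Ω / (4 * β) := by
  have hD1 := one_le_Dc hK1 ha.le hβ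
  have hD4 : Dc K1 a β ≤ 4 * K1 := Dc_le_four_mul (by linarith) (by linarith) hβ
  have hD0 : 0 ≤ Dc K1 a β := by linarith
  have hw : 0 < 1 - 2 * a0 := by linarith
  have hκ : 0 ≤ momConst K1 a0 := momConst_nonneg
  have hμ0 := (muKG_pos ha).le
  have hbound := h.abs_gAvg_momentumEuler_sub_le ha.le hβ0
    (momFactor_nonneg (by linarith) hβ0 hD0) hD0 (n := 1) hφ
    (hF0 ▸ isHomogeneous_oscillator Ω _) hF hdecay
    (Dc_mul_exp_neg_le_half hD1 hflat (by linarith [sigma0_pos ha]))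
  rw [hF0, gAvg_momentumEuler_oscillator ha.le hβ0, exp_neg_sigma0 ha,
    one_sub_two_mul_muKG ha.le, momFactor] at hbound
  have hC : Ω / (1 / (1 + 2 * a)) ≤ 2 * Ω := by
    rw [div_div_eq_mul_div, div_one, mul_comm]
    gcongr
    linarith
  calc |gAvg N a β (momentumEuler N φ) - Ω / β| ≤ _ := hbound
    _ ≤ momConst K1 a0 / (1 - 2 * a0) ^ (1 + 1) * (4 * K1) * (4 / β) ^ 1 *
        (Nat.factorial 1 : ℝ) * (2 * (1 : ℕ)) * (2 * Ω) * (2 * (4 * K1 * (2 * muKG a))) := by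
        gcongr
    _ = 4096 * K1 ^ 2 * momConst K1 a0 * muKG a / (1 - 2 * a0) ^ 2 * (Ω / (4 * β)) := by
        rw [Nat.factorial_one, Nat.cast_one]
        field_simp
        ring
    _ ≤ 1 * (Ω / (4 * β)) := by
        gcongr
        rw [div_le_one (by positivity)]
        exact const_mul_le_sq_of_lt_seedThreshold (by linarith) hμ0 hμ
    _ = Ω / (4 * β) := one_mul _

end Seed

section Corrections

/-- The sum of a convergent series dominating `∑ k < r, 2 (k + 2) (k + 2)! ρ ^ k` uniformly in the
perturbation order `r`. -/
noncomputable def correctionSeries : ℝ := ∑' n : ℕ, 8 * ((n : ℝ) ^ 4 * (1 / 2 : ℝ) ^ n)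

theorem correctionSeries_nonneg : 0 ≤ correctionSeries := tsum_nonneg fun _ => by positivity

/-- The threshold `β3`, above which the corrections `φ_s`, `s ≥ 1`, are a small perturbation of
the leading part of the seed. The `+ 1` only makes it positive. -/
noncomputable def correctionThreshold (K1 a0 C1 Ct Ω : ℝ) : ℝ :=
  512 * momConst K1 a0 * K1 * C1 * Real.exp Ct ^ 2 * correctionSeries /
    ((1 - 2 * a0) ^ 3 * Ω) + 1

theorem correctionThreshold_pos {K1 a0 C1 Ω : ℝ} (hK1 : 0 ≤ K1) (ha0 : a0 < 1 / 2) (hC1 : 0 ≤ C1)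
    (hΩ : 0 < Ω) (Ct : ℝ) : 0 < correctionThreshold K1 a0 C1 Ct Ω := by
  have hw : 0 < 1 - 2 * a0 := by linarith
  have hκ : 0 ≤ momConst K1 a0 := momConst_nonneg
  have hS := correctionSeries_nonneg
  unfold correctionThreshold
  positivity

/-- The ratio of the geometric factor in the bounds for the corrections of consecutive orders. -/
noncomputable def correctionRatio (a β Ct Fr : ℝ) : ℝ :=
  4 * Real.exp Ct * Fr / (β * (1 - 2 * a))

theorem factorial_mul_pow_le {k : ℕ} {ρ : ℝ} (h0 : 0 ≤ ρ)
    (hρ : ρ ≤ Real.exp 1 / (2 * ((k + 2 : ℕ) : ℝ))) :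
    ((k + 2).factorial : ℝ) * ρ ^ k ≤ ((k + 2 : ℕ) : ℝ) ^ 3 * (1 / 2) ^ k := by
  have hstirling : ((k + 2).factorial : ℝ) * Real.exp 1 ^ k ≤ ((k + 2 : ℕ) : ℝ) ^ (k + 3) := by
    refine le_of_mul_le_mul_left ?_ (Real.exp_pos 1)
    calc Real.exp 1 * (((k + 2).factorial : ℝ) * Real.exp 1 ^ k)
        = ((k + 2).factorial : ℝ) * Real.exp 1 ^ (k + 1) := by ring
      _ ≤ ((k + 2).factorial : ℝ) * Real.exp 1 ^ (k + 2) := by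
          gcongr
          · exact Real.one_le_exp zero_le_one
          · exact Nat.le_succ _
      _ ≤ Real.exp 1 * ((k + 2 : ℕ) : ℝ) ^ (k + 3) := factorial_mul_exp_one_pow_le (by omega)
  calc ((k + 2).factorial : ℝ) * ρ ^ k
      ≤ ((k + 2).factorial : ℝ) * (Real.exp 1 / (2 * ((k + 2 : ℕ) : ℝ))) ^ k := by gcongr
    _ = ((k + 2).factorial : ℝ) * Real.exp 1 ^ k / ((k + 2 : ℕ) : ℝ) ^ k * (1 / 2) ^ k := by
        rw [div_pow, mul_pow, div_pow, one_pow]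
        field_simp
    _ ≤ ((k + 2 : ℕ) : ℝ) ^ (k + 3) / ((k + 2 : ℕ) : ℝ) ^ k * (1 / 2) ^ k := by gcongr
    _ = ((k + 2 : ℕ) : ℝ) ^ 3 * (1 / 2) ^ k := by
        rw [pow_add, mul_div_cancel_left₀ _ (by positivity)]

theorem sum_factorial_mul_pow_le_correctionSeries {r : ℕ} {ρ : ℝ} (h0 : 0 ≤ ρ)
    (hρ : ρ ≤ Real.exp 1 / (2 * ((r : ℝ) + 1))) :
    ∑ k ∈ Finset.range r, ((k + 2).factorial : ℝ) * (2 * ((k + 2 : ℕ) : ℝ)) * ρ ^ k ≤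
      correctionSeries := by
  have hsummable : Summable fun n : ℕ => 8 * ((n : ℝ) ^ 4 * (1 / 2 : ℝ) ^ n) :=
    (summable_pow_mul_geometric_of_norm_lt_one (R := ℝ) 4 (r := 1 / 2) (by norm_num)).mul_left 8
  calc ∑ k ∈ Finset.range r, ((k + 2).factorial : ℝ) * (2 * ((k + 2 : ℕ) : ℝ)) * ρ ^ k
      ≤ ∑ k ∈ Finset.range r, 8 * (((k + 2 : ℕ) : ℝ) ^ 4 * (1 / 2 : ℝ) ^ (k + 2)) := by
        refine Finset.sum_le_sum fun k hk => ?_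
        have hkr : ((k + 2 : ℕ) : ℝ) ≤ r + 1 := by
          exact_mod_cast Nat.succ_le_succ (Finset.mem_range.1 hk)
        calc ((k + 2).factorial : ℝ) * (2 * ((k + 2 : ℕ) : ℝ)) * ρ ^ k
            = 2 * ((k + 2 : ℕ) : ℝ) * (((k + 2).factorial : ℝ) * ρ ^ k) := by ring
          _ ≤ 2 * ((k + 2 : ℕ) : ℝ) * (((k + 2 : ℕ) : ℝ) ^ 3 * (1 / 2) ^ k) := by
              gcongr ?_ * ?_
              exact factorial_mul_pow_le h0 (hρ.trans (by gcongr))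
          _ = 8 * (((k + 2 : ℕ) : ℝ) ^ 4 * (1 / 2 : ℝ) ^ (k + 2)) := by ring
    _ = ∑ n ∈ (Finset.range r).map (addRightEmbedding 2),
          8 * ((n : ℝ) ^ 4 * (1 / 2 : ℝ) ^ n) := by
        rw [Finset.sum_map]
        rfl
    _ ≤ correctionSeries := hsummable.sum_le_tsum _ fun _ _ => by positivity

variable {N r : ℕ} {a0 K1 a β Ω C1 Ct Fr : ℝ}

theorem correctionRatio_le (ha : 0 < a) (ha' : a < 1 / 2) (hΩ : 0 < Ω) (hC1 : 0 < C1)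
    (hCt : 0 ≤ Ct) (hβ : 0 < β)
    (hFr : Fr ≤ 48 * (r : ℝ) ^ 2 * C1 / (Ω * (1 - muflat a ^ 2) * (1 - muflat a)))
    (hb : 6 * Real.exp Ct * betaCirc a Ct C1 Ω * (r : ℝ) ^ 2 * ((r : ℝ) + 1) < β) :
    correctionRatio a β Ct Fr ≤ Real.exp 1 / (2 * ((r : ℝ) + 1)) := by
  have hv : 0 < 1 - 2 * a := by linarith
  have hf1 : 0 < 1 - muflat a := sub_pos.2 (muflat_lt_one ha)
  have hf2 : 0 < 1 - muflat a ^ 2 := sub_pos.2 (muflat_sq_lt_one ha)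
  set Q := C1 / ((1 - muflat a ^ 2) * (1 - muflat a) * (1 - 2 * a) * Ω) with hQ
  have hQ0 : 0 ≤ Q := by positivity
  have hcirc : betaCirc a Ct C1 Ω = 64 * Real.exp Ct * Q / Real.exp 1 := by
    rw [betaCirc, A2c, Real.sq_sqrt hv.le, Real.exp_sub, hQ]
    field_simp
    norm_num
  have hFr' : Fr / (1 - 2 * a) ≤ 48 * r ^ 2 * Q := by
    rw [div_le_iff₀ hv, hQ]
    refine hFr.trans_eq ?_
    field_simp
  rw [hcirc] at hb
  rw [correctionRatio, le_div_iff₀ (by positivity)]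
  calc 4 * Real.exp Ct * Fr / (β * (1 - 2 * a)) * (2 * (r + 1))
      = 8 * Real.exp Ct * (Fr / (1 - 2 * a)) * (r + 1) / β := by field_simp; ring
    _ ≤ 8 * Real.exp Ct * (48 * r ^ 2 * Q) * (r + 1) / β := by gcongr
    _ = 1 * (384 * Real.exp Ct * Q * r ^ 2 * (r + 1) / β) := by ring
    _ ≤ Real.exp Ct * (384 * Real.exp Ct * Q * r ^ 2 * (r + 1) / β) := by
        gcongr
        exact Real.one_le_exp hCt
    _ = Real.exp 1 * (6 * Real.exp Ct * (64 * Real.exp Ct * Q / Real.exp 1) * r ^ 2 * (r + 1))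
          / β := by field_simp; ring
    _ ≤ Real.exp 1 * β / β := by gcongr
    _ = Real.exp 1 := mul_div_cancel_right₀ _ hβ.ne'

theorem quarter_sigma0_le_correctionRate (ha : 0 < a) {s r : ℕ} (hs : 1 ≤ s) (hsr : s ≤ r) :
    sigma0 a / 4 ≤
      ((s : ℝ) * (sigma0 a / 4) + ((r : ℝ) - s) * (sigma0 a / 2)) / (r : ℝ) := by
  have hr : (0 : ℝ) < r := by exact_mod_cast hs.trans hsr
  have hsr' : (s : ℝ) ≤ r := by exact_mod_cast hsr
  rw [le_div_iff₀ hr]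
  nlinarith [sigma0_pos ha]

theorem abs_gAvg_momentumEuler_correction_le
    (h : MomentBound N a β (momFactor K1 a0 a β) (Dc K1 a β)) (ha : 0 < a) (ha' : a < 1 / 2)
    (hβ : 0 < β) (hD : 1 ≤ Dc K1 a β) (hflat : Dc K1 a β ^ 2 * muflat a ≤ 1 / 2) {k : ℕ}
    {σ : ℝ} (hσ : sigma0 a / 4 ≤ σ) {φ : Pol N} (hφ : φ.IsHomogeneous (2 * (k + 2)))
    (hclass : SeedClassD (Real.exp (((k + 1 : ℕ) + 1) * Ct) * Fr ^ k * C1) σ φ) :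
    |gAvg N a β (momentumEuler N φ)| ≤
      32 * momConst K1 a0 * Dc K1 a β * C1 * Real.exp Ct ^ 2 / (β ^ 2 * (1 - 2 * a) ^ 3) *
        (((k + 2).factorial : ℝ) * (2 * ((k + 2 : ℕ) : ℝ)) * correctionRatio a β Ct Fr ^ k) := by
  have hv : 0 < 1 - 2 * a := by linarith
  have hexp : Real.exp (((k + 1 : ℕ) + 1) * Ct) = Real.exp Ct ^ (k + 2) := by
    rw [← Real.exp_nat_mul]
    push_cast
    ring_nf
  refine (h.abs_gAvg_momentumEuler_le_of_seedClassD ha.le hβ (momFactor_nonneg ha' hβ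
    (zero_le_one.trans hD)) (zero_le_one.trans hD) hφ hclass
    (Dc_mul_exp_neg_le_half hD hflat hσ)).trans_eq ?_
  rw [hexp, momFactor, correctionRatio, div_pow, div_pow, mul_pow, mul_pow, mul_pow, pow_add _ k 2,
    pow_add _ k 2, pow_add _ k 2, show k + 2 + 1 = k + 3 from rfl, pow_add _ k 3]
  field_simp
  ring

theorem abs_gAvg_momentumEuler_corrections_le
    (h : MomentBound N a β (momFactor K1 a0 a β) (Dc K1 a β)) (ha : 0 < a) (haa : a < a0)
    (ha0 : a0 < 1 / 2) (hβ : 3 / 2 < β ^ 2) (hβ0 : 0 < β) (hK1 : 1 ≤ K1) (hΩ : 0 < Ω)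
    (hC1 : 0 ≤ C1) (hFr : 0 ≤ Fr) (hflat : Dc K1 a β ^ 2 * muflat a ≤ 1 / 2)
    (hρ : correctionRatio a β Ct Fr ≤ Real.exp 1 / (2 * ((r : ℝ) + 1)))
    (hβ3 : correctionThreshold K1 a0 C1 Ct Ω < β) {φ : ℕ → Pol N}
    (hhom : ∀ s : ℕ, s ≤ r → (φ s).IsHomogeneous (2 * s + 2))
    (hclass : ∀ s : ℕ, 1 ≤ s → s ≤ r →
      SeedClassD (Real.exp (((s : ℝ) + 1) * Ct) * Fr ^ (s - 1) * C1)
        (((s : ℝ) * (sigma0 a / 4) + ((r : ℝ) - (s : ℝ)) * (sigma0 a / 2)) / (r : ℝ)) (φ s)) :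
    |gAvg N a β (momentumEuler N (∑ k ∈ Finset.range r, φ (k + 1)))| ≤ Ω / (4 * β) := by
  have hD1 := one_le_Dc hK1 ha.le hβ
  have hD4 : Dc K1 a β ≤ 4 * K1 := Dc_le_four_mul (by linarith) (by linarith) hβ
  have hw : 0 < 1 - 2 * a0 := by linarith
  have hv : 0 < 1 - 2 * a := by linarith
  have hκ : 0 ≤ momConst K1 a0 := momConst_nonneg
  have hS := correctionSeries_nonneg
  have hρ0 : 0 ≤ correctionRatio a β Ct Fr := by
    unfold correctionRatio
    positivity
  rw [map_sum, gAvg_sum ha.le hβ0]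
  calc |∑ k ∈ Finset.range r, gAvg N a β (momentumEuler N (φ (k + 1)))|
      ≤ ∑ k ∈ Finset.range r, |gAvg N a β (momentumEuler N (φ (k + 1)))| :=
        Finset.abs_sum_le_sum_abs _ _
    _ ≤ ∑ k ∈ Finset.range r, _ := Finset.sum_le_sum fun k hk =>
        have hkr : k + 1 ≤ r := Finset.mem_range.1 hk
        abs_gAvg_momentumEuler_correction_le h ha (by linarith) hβ0 hD1 hflat
          (quarter_sigma0_le_correctionRate ha k.succ_pos hkr) (hhom _ hkr)
          (hclass _ k.succ_pos hkr)
    _ ≤ 32 * momConst K1 a0 * Dc K1 a β * C1 * Real.exp Ct ^ 2 / (β ^ 2 * (1 - 2 * a) ^ 3) *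
        correctionSeries := by
        rw [← Finset.mul_sum]
        gcongr
        exact sum_factorial_mul_pow_le_correctionSeries hρ0 hρ
    _ ≤ 32 * momConst K1 a0 * (4 * K1) * C1 * Real.exp Ct ^ 2 / (β ^ 2 * (1 - 2 * a0) ^ 3) *
        correctionSeries := by gcongr
    _ = (correctionThreshold K1 a0 C1 Ct Ω - 1) * (Ω / (4 * β ^ 2)) := by
        rw [correctionThreshold, add_sub_cancel_right]
        field_simp
        ring
    _ ≤ β * (Ω / (4 * β ^ 2)) := by
        gcongr
        linarith
    _ = Ω / (4 * β) := by field_simp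

end Corrections

theorem le_pVar_oplus_add {N : ℕ} {a β Ω : ℝ} (hN : 0 < N) (ha : 0 ≤ a) (hβ : 0 < β) (hΩ : 0 ≤ Ω)
    {p q : Pol N} (hp : |gAvg N a β (momentumEuler N p) - Ω / β| ≤ Ω / (4 * β))
    (hq : |gAvg N a β (momentumEuler N q)| ≤ Ω / (4 * β)) :
    (N : ℝ) / β ^ 2 * (Ω ^ 2 / 8) ≤ pVar N a β (evalPhase (oplus (p + q))) := by
  have hsum : Ω / (2 * β) ≤ gAvg N a β (momentumEuler N (p + q)) := by
    have hsplit : Ω / β = Ω / (2 * β) + Ω / (4 * β) + Ω / (4 * β) := by field_simp; ring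
    rw [map_add, gAvg_add ha hβ]
    linarith [(abs_le.1 hp).1, (abs_le.1 hq).1]
  calc (N : ℝ) / β ^ 2 * (Ω ^ 2 / 8) = N / 2 * (Ω / (2 * β)) ^ 2 := by ring
    _ ≤ N / 2 * gAvg N a β (momentumEuler N (p + q)) ^ 2 := by gcongr
    _ ≤ pVar N a β (evalPhase (oplus (p + q))) :=
        half_mul_sq_gAvg_momentumEuler_le_pVar_oplus hN ha hβ _

theorem stmt15_general (a0 β0 K1 Ω C1 Ct : ℝ) (ha0 : a0 < 1 / 2) (hK1 : 1 ≤ K1) (hΩ : 0 < Ω)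
    (hC1 : 0 < C1) (hCt : 0 ≤ Ct) (hMom : MomEstimate a0 β0 K1) :
    ∃ μ2 β3 : ℝ, 0 < μ2 ∧ 0 < β3 ∧
      ∀ (N : ℕ) (hN : 0 < N) (a β : ℝ) (r : ℕ) (Fr : ℝ) (φ : ℕ → Pol N),
        0 < a → a < a0 →
        24 * (r : ℝ) ^ 2 * C1 / (Ω * (1 - muflat a ^ 2) * (1 - muflat a)) ≤ Fr →
        Fr ≤ 48 * (r : ℝ) ^ 2 * C1 / (Ω * (1 - muflat a ^ 2) * (1 - muflat a)) →
        (∀ s : ℕ, s ≤ r → (φ s).IsHomogeneous (2 * s + 2)) →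
        (∃ F : ℕ → Pol N, IsDecomp (φ 0) F ∧
          F 0 = C (Ω / 2) *
            (X (Sum.inl (⟨0, hN⟩ : Fin N)) ^ 2 + X (Sum.inr (⟨0, hN⟩ : Fin N)) ^ 2) ∧
          Decay (Ω / (1 - 2 * muKG a)) (sigma0 a) F) →
        (∀ s : ℕ, 1 ≤ s → s ≤ r →
          SeedClassD (Real.exp (((s : ℝ) + 1) * Ct) * Fr ^ (s - 1) * C1)
            (((s : ℝ) * (sigma0 a / 4) + ((r : ℝ) - (s : ℝ)) * (sigma0 a / 2)) / (r : ℝ))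
            (φ s)) →
        muKG a < μ2 → Dc K1 a β ^ 2 * muflat a ≤ 1 / 2 → β0 < β → β3 < β →
        6 * Real.exp Ct * betaCirc a Ct C1 Ω * (r : ℝ) ^ 2 * ((r : ℝ) + 1) < β →
        Real.sqrt (3 / 2) < β →
        (N : ℝ) / β ^ 2 * (Ω ^ 2 / 8) ≤
          pVar N a β (evalPhase (oplus (∑ s ∈ Finset.range (r + 1), φ s))) := by
  refine ⟨seedThreshold K1 a0, correctionThreshold K1 a0 C1 Ct Ω,
    seedThreshold_pos (by linarith) ha0, correctionThreshold_pos (by linarith) ha0 hC1.le hΩ Ct, ?_⟩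
  intro N hN a β r Fr φ ha haa hFr hFr' hhom ⟨F, hF, hF0, hdecay⟩ hclass hμ hflat hββ hβ3 hβr hβs
  have hβ : 0 < β := (Real.sqrt_nonneg _).trans_lt hβs
  have hβ2 : 3 / 2 < β ^ 2 := (Real.sqrt_lt' hβ).1 hβs
  have hmom := hMom.momentBound hN ha haa (haa.trans ha0) hββ hβ (by linarith)
    (one_le_Dc hK1 ha.le hβ2)
  have hflat1 : 0 < 1 - muflat a := sub_pos.2 (muflat_lt_one ha)
  have hflat2 : 0 < 1 - muflat a ^ 2 := sub_pos.2 (muflat_sq_lt_one ha)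
  have hFr0 : 0 ≤ Fr := le_trans (by positivity) hFr
  have hρ := correctionRatio_le ha (haa.trans ha0) hΩ hC1 hCt hβ hFr' hβr
  rw [Finset.sum_range_succ', add_comm]
  exact le_pVar_oplus_add hN ha.le hβ hΩ.le
    (abs_gAvg_momentumEuler_seed_sub_le hmom hN ha haa ha0 hβ2 hβ hK1 hΩ hflat hμ
      (hhom 0 r.zero_le) hF hF0 hdecay)
    (abs_gAvg_momentumEuler_corrections_le hmom ha haa ha0 hβ2 hβ hK1 hΩ hC1.le hFr0 hflat hρ hβ3
      hhom hclass)

/-- lower bound of `σ²[Φ]`: there exists `β3 > 0` such that, with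
`μ2` and `β4` the thresholds of the seed-variance lemma, whenever `μ < μ2`,
`D²μ♭ ≤ 1/2` and `β > max{β0, β3, β4, 6e^{C̃}β°r²(r+1), √(3/2)}`, the truncated
adiabatic invariant `Φ = Φ^{(r)} = φ^⊕` (with `φ = Σ_{s=0}^r φ_s`, `φ_s` homogeneous
of degree `2s+2`, `φ_0` of class `D(Ω/(1−2μ), σ0)` with `φ_0^{(0)} = (Ω/2)(x_0²+y_0²)`
and `φ_s` of class `D(e^{(s+1)C̃} F_r^{s−1} C1, σ_s)` for `1 ≤ s ≤ r`) satisfies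
`σ²[Φ] ≥ (N/β²)·Ω²/10`. -/
theorem stmt15 (a0 β0 K1 Ω C1 Ct : ℝ)
    (ha0 : 0 < a0) (ha0' : a0 < 1 / 2) (hβ0 : 0 < β0) (hK1 : 2 < K1)
    (hΩ : 0 < Ω) (hC1 : 0 < C1) (hCt : 0 ≤ Ct)
    (hCorr : CorrEstimate a0 β0 K1) (hMom : MomEstimate a0 β0 K1) :
    ∃ μ2 β4 β3 : ℝ, 0 < μ2 ∧ 0 < β4 ∧ 0 < β3 ∧
      ∀ (N : ℕ) (hN : 0 < N) (a β : ℝ) (r : ℕ) (Fr : ℝ) (φ : ℕ → Pol N),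
        0 < a → a < a0 →
        -- `F_r` is the constant of the perturbative construction
        24 * (r : ℝ) ^ 2 * C1 / (Ω * (1 - muflat a ^ 2) * (1 - muflat a)) ≤ Fr →
        Fr ≤ 48 * (r : ℝ) ^ 2 * C1 / (Ω * (1 - muflat a ^ 2) * (1 - muflat a)) →
        0 < r →
        -- structure of the truncated adiabatic invariant `Φ^{(r)}`
        (∀ s : ℕ, s ≤ r → (φ s).IsHomogeneous (2 * s + 2)) →
        (∃ F : ℕ → Pol N, IsDecomp (φ 0) F ∧
          F 0 = MvPolynomial.C (Ω / 2) *
            ((X (Sum.inl (⟨0, hN⟩ : Fin N))) ^ 2 + (X (Sum.inr (⟨0, hN⟩ : Fin N))) ^ 2) ∧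
          Decay (Ω / (1 - 2 * muKG a)) (sigma0 a) F) →
        (∀ s : ℕ, 1 ≤ s → s ≤ r →
          SeedClassD (Real.exp (((s : ℝ) + 1) * Ct) * Fr ^ (s - 1) * C1)
            (((s : ℝ) * (sigma0 a / 4) + ((r : ℝ) - (s : ℝ)) * (sigma0 a / 2)) / (r : ℝ))
            (φ s)) →
        -- thresholds
        muKG a < μ2 →
        Dc K1 a β ^ 2 * muflat a ≤ 1 / 2 →
        max (max (max β0 β3) (max β4
            (6 * Real.exp Ct * betaCirc a Ct C1 Ω * (r : ℝ) ^ 2 * ((r : ℝ) + 1))))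
          (Real.sqrt (3 / 2)) < β →
        (N : ℝ) / β ^ 2 * (Ω ^ 2 / 10) ≤
          pVar N a β (fun z =>
            MvPolynomial.eval (Sum.elim z.1 z.2)
              (oplus (∑ s ∈ Finset.range (r + 1), φ s))) := by
  obtain ⟨μ2, β3, hμ2, hβ3, h⟩ :=
    stmt15_general a0 β0 K1 Ω C1 Ct ha0' (by linarith) hΩ hC1 hCt hMom
  refine ⟨μ2, 1, β3, hμ2, one_pos, hβ3, fun N hN a β r Fr φ ha haa hFr hFr' _ hhom h0 hs hμ hflat
    hmax => ?_⟩
  simp only [max_lt_iff] at hmax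
  obtain ⟨⟨⟨hββ, hβ3⟩, _, hβr⟩, hβs⟩ := hmax
  exact le_trans (by gcongr; norm_num)
    (h N hN a β r Fr φ ha haa hFr hFr' hhom h0 hs hμ hflat hββ hβ3 hβr hβs)
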